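/- arXiv:1810.03267 — 3 statements merged into one kernel-verified Lean document; each statement's English description precedes it below -/
import Mathlib

section
/- Fix e_b, e_p ∈ [0,1] and let S be the set of two-qubit density matrices ρ with Tr(Π⁻ρ) = e_b and Tr(Π_x⁻ρ) = e_p. Then (i) every ρ ∈ S satisfies C(Φ(ρ)) ≥ 1 − H(e_p), and (ii) the Bell-diagonal state with weights (1−e_b)(1−e_p), (1−e_b)e_p, e_b(1−e_p), e_b·e_p on the Bell states |Φ⁺⟩, |Φ⁻⟩, |Ψ⁺⟩, |Ψ⁻⟩ respectively belongs to S and attains C(Φ(ρ)) = 1 − H(e_p). Hence the minimum of C(Φ(ρ)) − H(e_b) over S equals 1 − H(e_p) − H(e_b) (the BB84 key rate). -/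
/-!
Write `η x = -x log x` and `h` for the natural-logarithm binary entropy. The dephased state is block
diagonal with respect to Z-parity, with blocks `[[a, z], [z̄, d]]` on `|00⟩, |11⟩` and
`[[b, w], [w̄, c]]` on `|01⟩, |10⟩`, so its coherence is a sum of two block terms
`η a + η d - η μ - η ν`, where `μ, ν` are the eigenvalues of the block (`relEntCoh_dephase`). The
phase error rate is `ep = 1/2 - Re z - Re w`.

For a block of trace `s`, put `a - d = s u`, `2 Re z = s y`, `μ - ν = s r`; then
`u² + y² ≤ r² ≤ 1`. The entropy deficit `log 2 - h ((1 + t) / 2)` is a power series in `t²` with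
nonnegative coefficients and no constant term (`hasSum_entropy_deficit`), hence monotone and
superadditive in `t²` (`binEntropy_superadd`). Therefore the block term is at least
`s (log 2 - h e)` with `e = (1 - y) / 2` (`block_bound`). Since `ep` is the average of the two values
of `e` with the block traces as weights, concavity of `h` gives the lower bound (`lower_bound`).

For the Bell-diagonal state with independent bit and phase errors both blocks have uniform
diagonal and the same conditional phase error rate, so every inequality above is an equality
(`bellDiag_relEntCoh`).
-/

open Matrix Complex Kronecker
open scoped ComplexOrder

noncomputable section

/-- von Neumann entropy (base 2), via eigenvalues; junk value 0 if not Hermitian. -/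
noncomputable def vnEntropy {n : Type*} [Fintype n] [DecidableEq n] (ρ : Matrix n n ℂ) : ℝ :=
  if h : ρ.IsHermitian then -∑ i, h.eigenvalues i * Real.logb 2 (h.eigenvalues i) else 0

/-- The diagonal part of a matrix. -/
def diagPart {n : Type*} [Fintype n] [DecidableEq n] (ρ : Matrix n n ℂ) : Matrix n n ℂ :=
  Matrix.diagonal fun i => ρ i i

/-- Relative entropy of coherence in the computational basis. -/
noncomputable def relEntCoh {n : Type*} [Fintype n] [DecidableEq n] (ρ : Matrix n n ℂ) : ℝ :=
  vnEntropy (diagPart ρ) - vnEntropy ρ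

/-- A density matrix: positive semidefinite with trace one. -/
def IsDensity {n : Type*} [Fintype n] [DecidableEq n] (ρ : Matrix n n ℂ) : Prop :=
  ρ.PosSemidef ∧ ρ.trace = 1

/-- Two-qubit index type: the first component is qubit A, the second is qubit B. -/
abbrev Q2 := Fin 2 × Fin 2

/-- Z-parity projector Π⁺ = |00⟩⟨00| + |11⟩⟨11|. -/
def PiPlus : Matrix Q2 Q2 ℂ := Matrix.diagonal fun i => if i.1 = i.2 then 1 else 0

/-- Z-parity projector Π⁻ = |01⟩⟨01| + |10⟩⟨10|. -/
def PiMinus : Matrix Q2 Q2 ℂ := Matrix.diagonal fun i => if i.1 = i.2 then 0 else 1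

/-- Partial dephasing channel Φ(ρ) = Π⁺ρΠ⁺ + Π⁻ρΠ⁻. -/
def dephase (ρ : Matrix Q2 Q2 ℂ) : Matrix Q2 Q2 ℂ :=
  PiPlus * ρ * PiPlus + PiMinus * ρ * PiMinus

/-- Binary entropy (base 2). -/
noncomputable def binEnt (e : ℝ) : ℝ := -(e * Real.logb 2 e) - (1 - e) * Real.logb 2 (1 - e)

/-- X-basis projector Π_x⁻ = |+−⟩⟨+−| + |−+⟩⟨−+|, written entrywise. -/
def PiXMinus : Matrix Q2 Q2 ℂ :=
  Matrix.of fun i j => (1/4 : ℂ) *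
    ((if i.1 = j.1 then 1 else -1) + (if i.2 = j.2 then 1 else -1))

/-- phase i^a for a : Fin 2 -/
def yph : Fin 2 → ℂ := fun a => if a = 0 then 1 else Complex.I

/-- Y-basis projector Π_y⁻ = |+i,+i⟩⟨+i,+i| + |−i,−i⟩⟨−i,−i|, written entrywise. -/
def PiYMinus : Matrix Q2 Q2 ℂ :=
  Matrix.of fun i j => (1/4 : ℂ) *
    (yph i.1 * yph i.2 * star (yph j.1) * star (yph j.2)
      + star (yph i.1) * star (yph i.2) * yph j.1 * yph j.2)

/-- The matrix ρ(a,b): diagonal (m00,m11,m22,m33), entry a between |00⟩,|11⟩,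
entry b between |01⟩,|10⟩, zeros elsewhere. -/
def rhoGen (m00 m11 m22 m33 a b : ℝ) : Matrix Q2 Q2 ℂ :=
  Matrix.of fun i j =>
    if i = j then
      (if i = (0, 0) then (m00 : ℂ) else if i = (0, 1) then (m11 : ℂ)
        else if i = (1, 0) then (m22 : ℂ) else (m33 : ℂ))
    else if (i = ((0 : Fin 2), (0 : Fin 2)) ∧ j = (1, 1)) ∨ (i = (1, 1) ∧ j = (0, 0)) then (a : ℂ)
    else if (i = ((0 : Fin 2), (1 : Fin 2)) ∧ j = (1, 0)) ∨ (i = (1, 0) ∧ j = (0, 1)) then (b : ℂ)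
    else 0

/-- The Bell-diagonal state with weights p0,p1,p2,p3 on |Φ⁺⟩,|Φ⁻⟩,|Ψ⁺⟩,|Ψ⁻⟩. -/
def bellDiag (p0 p1 p2 p3 : ℝ) : Matrix Q2 Q2 ℂ :=
  rhoGen ((p0 + p1)/2) ((p2 + p3)/2) ((p2 + p3)/2) ((p0 + p1)/2) ((p0 - p1)/2) ((p2 - p3)/2)

/-- Partial trace over the first qubit (A). -/
def trA (M : Matrix Q2 Q2 ℂ) : Matrix (Fin 2) (Fin 2) ℂ :=
  Matrix.of fun j j' => ∑ i : Fin 2, M (i, j) (i, j')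

/-- Partial trace over the second qubit (B). -/
def trB (M : Matrix Q2 Q2 ℂ) : Matrix (Fin 2) (Fin 2) ℂ :=
  Matrix.of fun i i' => ∑ j : Fin 2, M (i, j) (i', j)

/-- Coherence-based key-rate functional K(ρ) = C(Φ(ρ)) − H(Tr(Π⁻ρ)). -/
noncomputable def keyRate (ρ : Matrix Q2 Q2 ℂ) : ℝ :=
  relEntCoh (dephase ρ) - binEnt ((PiMinus * ρ).trace.re)

/-- Outer product |ψ⟩⟨ψ|. -/
def outer (ψ : Q2 → ℂ) : Matrix Q2 Q2 ℂ := Matrix.of fun i j => ψ i * star (ψ j)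

/-- Basis-optimized key rate: supremum of K over all local basis changes. -/
noncomputable def Km (ρ : Matrix Q2 Q2 ℂ) : ℝ :=
  sSup {x : ℝ | ∃ U V : Matrix (Fin 2) (Fin 2) ℂ, U ∈ Matrix.unitaryGroup (Fin 2) ℂ ∧
    V ∈ Matrix.unitaryGroup (Fin 2) ℂ ∧ x = keyRate ((U ⊗ₖ V) * ρ * (U ⊗ₖ V)ᴴ)}


/-! ### Superadditivity of the binary entropy deficit -/

/-- Power series of the entropy deficit of the distribution `((1 + t) / 2, (1 - t) / 2)`. All
coefficients are nonnegative and only even powers of `t` occur, which is what makes the deficit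
superadditive as a function of `t ^ 2`. -/
lemma hasSum_entropy_deficit {t : ℝ} (ht : |t| < 1) :
    HasSum (fun k : ℕ => (t ^ 2) ^ (k + 1) * (1 / ((2 * k + 1) * (k + 1)) : ℝ))
      (2 * (Real.log 2 - Real.binEntropy ((1 + t) / 2))) := by
  have ht2 : |t ^ 2| < 1 := by
    rw [abs_pow]
    exact pow_lt_one₀ (abs_nonneg t) ht two_ne_zero
  have h1 := Real.hasSum_pow_div_log_of_abs_lt_one ht2
  have h2 := (Real.hasSum_log_sub_log_of_abs_lt_one ht).mul_left t
  obtain ⟨hl, hr⟩ := abs_lt.mp ht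
  have hp : (1 + t) ≠ 0 := by linarith
  have hm : (1 - t) ≠ 0 := by linarith
  have hterm : (fun k : ℕ => (t ^ 2) ^ (k + 1) * (1 / ((2 * k + 1) * (k + 1)) : ℝ)) =
      fun k : ℕ => t * (2 * (1 / (2 * (k : ℝ) + 1)) * t ^ (2 * k + 1))
        - (t ^ 2) ^ (k + 1) / (k + 1) := by
    funext k
    have : (2 * (k : ℝ) + 1) ≠ 0 := by positivity
    have : ((k : ℝ) + 1) ≠ 0 := by positivity
    field_simp
    ring
  have hval : 2 * (Real.log 2 - Real.binEntropy ((1 + t) / 2))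
      = t * (Real.log (1 + t) - Real.log (1 - t)) - -Real.log (1 - t ^ 2) := by
    have e : (1 : ℝ) - t ^ 2 = (1 + t) * (1 - t) := by ring
    have e2 : (1 : ℝ) - (1 + t) / 2 = (1 - t) / 2 := by ring
    rw [e, Real.log_mul hp hm, Real.binEntropy_eq_negMulLog_add_negMulLog_one_sub, e2]
    simp only [Real.negMulLog]
    rw [Real.log_div hp two_ne_zero, Real.log_div hm two_ne_zero]
    ring
  rw [hterm, hval]
  exact h2.sub h1

lemma binEntropy_superadd_of_lt {u x r : ℝ} (h : u ^ 2 + x ^ 2 ≤ r ^ 2) (hr : r ^ 2 < 1) :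
    Real.binEntropy ((1 + r) / 2) + Real.log 2
      ≤ Real.binEntropy ((1 + u) / 2) + Real.binEntropy ((1 + x) / 2) := by
  have hu : |u| < 1 := by
    rw [← sq_lt_one_iff_abs_lt_one]; nlinarith [sq_nonneg x]
  have hx : |x| < 1 := by
    rw [← sq_lt_one_iff_abs_lt_one]; nlinarith [sq_nonneg u]
  have hr' : |r| < 1 := by rwa [← sq_lt_one_iff_abs_lt_one]
  have key := hasSum_le (fun k => ?_)
    ((hasSum_entropy_deficit hu).add (hasSum_entropy_deficit hx)) (hasSum_entropy_deficit hr')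
  · linarith
  · rw [← add_mul]
    refine mul_le_mul_of_nonneg_right ?_ (by positivity)
    exact (pow_add_pow_le (sq_nonneg u) (sq_nonneg x) (Nat.succ_ne_zero k)).trans
      (pow_le_pow_left₀ (by positivity) h _)

/-- The closed case `r ^ 2 ≤ 1` (pure states), obtained from the open one by shrinking the Bloch
vector by a factor `c < 1` and letting `c → 1`. -/
lemma binEntropy_superadd {u x r : ℝ} (h : u ^ 2 + x ^ 2 ≤ r ^ 2) (hr : r ^ 2 ≤ 1) :
    Real.binEntropy ((1 + r) / 2) + Real.log 2
      ≤ Real.binEntropy ((1 + u) / 2) + Real.binEntropy ((1 + x) / 2) := by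
  have lim : ∀ t : ℝ, Filter.Tendsto (fun c : ℝ => Real.binEntropy ((1 + c * t) / 2))
      (nhdsWithin 1 (Set.Iio 1)) (nhds (Real.binEntropy ((1 + t) / 2))) := fun t => by
    have hc : Continuous (fun c : ℝ => Real.binEntropy ((1 + c * t) / 2)) := by fun_prop
    simpa using (hc.tendsto 1).mono_left nhdsWithin_le_nhds
  refine le_of_tendsto_of_tendsto ((lim r).add_const _) ((lim u).add (lim x)) ?_
  filter_upwards [Ioo_mem_nhdsLT (show (0 : ℝ) < 1 by norm_num)] with c hc
  have hc2 : c ^ 2 < 1 := by nlinarith [hc.1, hc.2]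
  refine binEntropy_superadd_of_lt ?_ ?_
  · nlinarith [sq_nonneg c]
  · nlinarith [sq_nonneg c, sq_nonneg r]

lemma negMulLog_split (s p : ℝ) :
    Real.negMulLog (s * p) + Real.negMulLog (s * (1 - p))
      = Real.negMulLog s + s * Real.binEntropy p := by
  rw [Real.negMulLog_mul, Real.negMulLog_mul, Real.binEntropy_eq_negMulLog_add_negMulLog_one_sub]
  ring

/-- The bound for one (unnormalised) `2 × 2` block with diagonal `a, d`, off-diagonal entry of real
part `x` and squared modulus `w`, and eigenvalues `μ, ν`. The number `e` is the phase error rate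
conditioned on the parity of the block. -/
lemma block_bound {a d x w μ ν : ℝ} (ha : 0 ≤ a) (hd : 0 ≤ d) (hw : w ≤ a * d) (hx : x ^ 2 ≤ w)
    (hs : μ + ν = a + d) (hp : μ * ν = a * d - w) :
    ∃ e ∈ Set.Icc (0 : ℝ) 1, (a + d) * e = (a + d) / 2 - x ∧
      (a + d) * (Real.log 2 - Real.binEntropy e)
        ≤ Real.negMulLog a + Real.negMulLog d - Real.negMulLog μ - Real.negMulLog ν := by
  rcases (add_nonneg ha hd).eq_or_lt with h0 | h0
  · have ha0 : a = 0 := by linarith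
    have hd0 : d = 0 := by linarith
    subst ha0 hd0
    have hx0 : x = 0 := by nlinarith
    have hw0 : w = 0 := by nlinarith
    have hμ : μ = 0 := by nlinarith
    have hν : ν = 0 := by linarith
    exact ⟨0, by simp, by simp [hx0], by simp [hμ, hν]⟩
  · obtain ⟨s, hsdef⟩ : ∃ s, s = a + d := ⟨_, rfl⟩
    have hs0 : 0 < s := hsdef ▸ h0
    have hsne : s ≠ 0 := hs0.ne'
    obtain ⟨r, hr⟩ : ∃ r, μ - ν = s * r := ⟨(μ - ν) / s, by field_simp⟩
    obtain ⟨u, hu⟩ : ∃ u, a - d = s * u := ⟨(a - d) / s, by field_simp⟩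
    obtain ⟨y, hy⟩ : ∃ y, 2 * x = s * y := ⟨2 * x / s, by field_simp⟩
    have hsr : s ^ 2 * r ^ 2 = s ^ 2 * u ^ 2 + 4 * w := by
      rw [← mul_pow, ← mul_pow, ← hr, ← hu]; nlinarith
    have hsy : s ^ 2 * y ^ 2 ≤ 4 * w := by
      rw [← mul_pow, ← hy]; nlinarith
    have hs2 : 0 < s ^ 2 := by positivity
    have h1 : u ^ 2 + y ^ 2 ≤ r ^ 2 := by
      refine le_of_mul_le_mul_left ?_ hs2
      linarith
    have h2 : r ^ 2 ≤ 1 := by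
      refine le_of_mul_le_mul_left ?_ hs2
      have : s ^ 2 * u ^ 2 = s ^ 2 - 4 * (a * d) := by
        rw [← mul_pow, ← hu, hsdef]; ring
      linarith
    have hy1 : y ^ 2 ≤ 1 := by nlinarith [sq_nonneg u]
    obtain ⟨hyl, hyr⟩ := abs_le.mp (sq_le_one_iff_abs_le_one y |>.mp hy1)
    refine ⟨(1 - y) / 2, ⟨by linarith, by linarith⟩, ?_, ?_⟩
    · rw [← hsdef]; linarith
    · have key := binEntropy_superadd h1 h2
      have ea : a = s * ((1 + u) / 2) := by linarith
      have ed : d = s * (1 - (1 + u) / 2) := by linarith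
      have eμ : μ = s * ((1 + r) / 2) := by linarith
      have eν : ν = s * (1 - (1 + r) / 2) := by linarith
      have ey : Real.binEntropy ((1 - y) / 2) = Real.binEntropy ((1 + y) / 2) := by
        rw [← Real.binEntropy_one_sub]; congr 1; ring
      have e1 := negMulLog_split s ((1 + u) / 2)
      have e2 := negMulLog_split s ((1 + r) / 2)
      rw [← ea, ← ed] at e1
      rw [← eμ, ← eν] at e2
      rw [ey, ← hsdef]
      nlinarith

lemma binEnt_eq (e : ℝ) : binEnt e = Real.binEntropy e / Real.log 2 := by
  rw [binEnt, Real.binEntropy_eq_negMulLog_add_negMulLog_one_sub]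
  simp only [Real.negMulLog, Real.logb]
  ring

/-! ### Entropies of dephased states -/

/-- The entropy is determined by any real factorisation of the characteristic polynomial. -/
lemma vnEntropy_of_charpoly {A : Matrix Q2 Q2 ℂ} (hA : A.IsHermitian) (m : Multiset ℝ)
    (h : A.charpoly = (m.map fun t : ℝ => Polynomial.X - Polynomial.C (t : ℂ)).prod) :
    vnEntropy A = (m.map Real.negMulLog).sum / Real.log 2 := by
  have hr := hA.roots_charpoly_eq_eigenvalues
  have hm : A.charpoly.roots = m.map (fun t : ℝ => (t : ℂ)) := by
    rw [h, ← Polynomial.roots_multiset_prod_X_sub_C (m.map (fun t : ℝ => (t : ℂ))),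
      Multiset.map_map]
    rfl
  rw [hm] at hr
  have hm' : m = Finset.univ.val.map hA.eigenvalues := by
    have := congrArg (Multiset.map Complex.re) hr
    simpa [Multiset.map_map, Function.comp_def] using this
  rw [vnEntropy, dif_pos hA, hm', Multiset.map_map, ← Finset.sum_eq_multiset_sum, Finset.sum_div, ← Finset.sum_neg_distrib]
  refine Finset.sum_congr rfl fun i _ => ?_
  simp only [Function.comp, Real.negMulLog, Real.logb]
  ring

/-- Reordering of the computational basis that separates even from odd Z-parity. -/
def parityEquiv : Q2 ≃ Fin 2 ⊕ Fin 2 where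
  toFun i := if i.1 = i.2 then Sum.inl i.1 else Sum.inr i.1
  invFun := Sum.elim (fun i => (i, i)) (fun i => (i, 1 - i))
  left_inv := by decide
  right_inv := by decide

lemma reindex_dephase (ρ : Matrix Q2 Q2 ℂ) :
    reindex parityEquiv parityEquiv (dephase ρ) =
      fromBlocks !![ρ (0, 0) (0, 0), ρ (0, 0) (1, 1); ρ (1, 1) (0, 0), ρ (1, 1) (1, 1)] 0 0
        !![ρ (0, 1) (0, 1), ρ (0, 1) (1, 0); ρ (1, 0) (0, 1), ρ (1, 0) (1, 0)] := by
  ext i j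
  rcases i with i | i <;> rcases j with j | j <;> fin_cases i <;> fin_cases j <;>
    simp [parityEquiv, dephase, PiPlus, PiMinus]

lemma dephase_diag (ρ : Matrix Q2 Q2 ℂ) (i : Q2) : dephase ρ i i = ρ i i := by
  rcases i with ⟨i, j⟩
  fin_cases i <;> fin_cases j <;> simp [dephase, PiPlus, PiMinus]

lemma dephase_isHermitian {ρ : Matrix Q2 Q2 ℂ} (h : ρ.IsHermitian) :
    (dephase ρ).IsHermitian := by
  have hP : PiPlusᴴ = PiPlus := by
    simp only [PiPlus, diagonal_conjTranspose]; congr 1; funext i; simp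
  have hM : PiMinusᴴ = PiMinus := by
    simp only [PiMinus, diagonal_conjTranspose]; congr 1; funext i; simp
  simp only [IsHermitian, dephase, conjTranspose_add, conjTranspose_mul, hP, hM, h.eq,
    Matrix.mul_assoc]

lemma charpoly_block {a d : ℝ} {z : ℂ} {μ ν : ℝ} (hs : μ + ν = a + d)
    (hp : μ * ν = a * d - Complex.normSq z) :
    (!![(a : ℂ), z; star z, (d : ℂ)]).charpoly
      = (Polynomial.X - Polynomial.C (μ : ℂ)) * (Polynomial.X - Polynomial.C (ν : ℂ)) := by
  have hs' : (a + d : ℂ) = μ + ν := by exact_mod_cast hs.symm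
  have hp' : (a * d - z * star z : ℂ) = μ * ν := by
    rw [← starRingEnd_apply, Complex.mul_conj]; exact_mod_cast hp.symm
  rw [charpoly_fin_two, trace_fin_two_of, det_fin_two_of, hs', hp', Polynomial.C_add,
    Polynomial.C_mul]
  ring

/-- Relative entropy of coherence of a dephased state in terms of its diagonal entries and of the
eigenvalues of its two parity blocks. -/
lemma relEntCoh_dephase {ρ : Matrix Q2 Q2 ℂ} (hρ : ρ.IsHermitian) {a d b c : ℝ} {z w : ℂ}
    {μ ν κ τ : ℝ} (ha : ρ (0, 0) (0, 0) = a) (hd : ρ (1, 1) (1, 1) = d)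
    (hb : ρ (0, 1) (0, 1) = b) (hc : ρ (1, 0) (1, 0) = c)
    (hz : ρ (0, 0) (1, 1) = z) (hw : ρ (0, 1) (1, 0) = w)
    (hs : μ + ν = a + d) (hp : μ * ν = a * d - Complex.normSq z)
    (hs' : κ + τ = b + c) (hp' : κ * τ = b * c - Complex.normSq w) :
    relEntCoh (dephase ρ) =
      ((Real.negMulLog a + Real.negMulLog d - Real.negMulLog μ - Real.negMulLog ν)
        + (Real.negMulLog b + Real.negMulLog c - Real.negMulLog κ - Real.negMulLog τ))
        / Real.log 2 := by
  have hz' : ρ (1, 1) (0, 0) = star z := by rw [← hz, hρ.apply]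
  have hw' : ρ (1, 0) (0, 1) = star w := by rw [← hw, hρ.apply]
  have e1 : vnEntropy (dephase ρ)
      = (({μ, ν, κ, τ} : Multiset ℝ).map Real.negMulLog).sum / Real.log 2 := by
    refine vnEntropy_of_charpoly (dephase_isHermitian hρ) _ ?_
    rw [← charpoly_reindex parityEquiv, reindex_dephase, charpoly_fromBlocks_zero₁₂, ha, hd, hb,
      hc, hz, hw, hz', hw', charpoly_block hs hp, charpoly_block hs' hp']
    simp [mul_assoc]
  have hdiag : diagPart (dephase ρ) = diagonal fun i => ρ i i := by
    simp only [diagPart, dephase_diag]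
  have e2 : vnEntropy (diagPart (dephase ρ))
      = (({a, b, c, d} : Multiset ℝ).map Real.negMulLog).sum / Real.log 2 := by
    rw [hdiag]
    refine vnEntropy_of_charpoly ?_ _ ?_
    · rw [IsHermitian, diagonal_conjTranspose]
      congr 1
      funext i
      exact hρ.apply i i
    · rw [charpoly_diagonal, Fintype.prod_prod_type]
      simp [ha, hb, hc, hd, mul_assoc]
  rw [relEntCoh, e1, e2]
  simp
  ring

/-! ### The two halves of the theorem -/

/-- The `2 × 2` minors of a positive semidefinite matrix are nonnegative. -/
lemma posSemidef_minor {ρ : Matrix Q2 Q2 ℂ} (h : ρ.PosSemidef) (i j : Q2) :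
    Complex.normSq (ρ i j) ≤ (ρ i i).re * (ρ j j).re := by
  have hdet := (h.submatrix ![i, j]).det_nonneg
  have hii : ((ρ i i).re : ℂ) = ρ i i := by
    exact Complex.conj_eq_iff_re.mp (h.1.apply i i)
  have hjj : ((ρ j j).re : ℂ) = ρ j j := by
    exact Complex.conj_eq_iff_re.mp (h.1.apply j j)
  rw [det_fin_two] at hdet
  simp only [submatrix_apply, cons_val_zero, cons_val_one] at hdet
  rw [← h.1.apply j i, ← starRingEnd_apply, Complex.mul_conj, ← hii, ← hjj] at hdet
  have : (0 : ℝ) ≤ (ρ i i).re * (ρ j j).re - Complex.normSq (ρ i j) := by exact_mod_cast hdet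
  linarith

lemma exists_roots {a d w : ℝ} (hw : 0 ≤ w) :
    ∃ μ ν : ℝ, μ + ν = a + d ∧ μ * ν = a * d - w := by
  refine ⟨(a + d + √((a - d) ^ 2 + 4 * w)) / 2, (a + d - √((a - d) ^ 2 + 4 * w)) / 2, by ring, ?_⟩
  have := Real.sq_sqrt (show 0 ≤ (a - d) ^ 2 + 4 * w by positivity)
  linear_combination (-1 / 4) * this

lemma lower_bound {ep : ℝ} {ρ : Matrix Q2 Q2 ℂ} (hρ : IsDensity ρ)
    (hX : (PiXMinus * ρ).trace = (ep : ℂ)) : 1 - binEnt ep ≤ relEntCoh (dephase ρ) := by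
  obtain ⟨hpsd, htr⟩ := hρ
  have hdiag : ∀ i, ρ i i = ((ρ i i).re : ℂ) := fun i =>
    (Complex.conj_eq_iff_re.mp (hpsd.1.apply i i)).symm
  have hnn : ∀ i, 0 ≤ (ρ i i).re := fun i => (Complex.nonneg_iff.mp (hpsd.diag_nonneg)).1
  have hre : ∀ z : ℂ, z.re ^ 2 ≤ Complex.normSq z := fun z => by
    rw [Complex.normSq_apply]; nlinarith [mul_self_nonneg z.im]
  obtain ⟨μ, ν, hs, hp⟩ := exists_roots (a := (ρ (0, 0) (0, 0)).re) (d := (ρ (1, 1) (1, 1)).re)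
    (Complex.normSq_nonneg (ρ (0, 0) (1, 1)))
  obtain ⟨κ, τ, hs', hp'⟩ := exists_roots (a := (ρ (0, 1) (0, 1)).re) (d := (ρ (1, 0) (1, 0)).re)
    (Complex.normSq_nonneg (ρ (0, 1) (1, 0)))
  obtain ⟨e, he, hee, hb⟩ := block_bound (hnn _) (hnn _) (posSemidef_minor hpsd _ _) (hre _) hs hp
  obtain ⟨f, hf, hff, hb'⟩ :=
    block_bound (hnn _) (hnn _) (posSemidef_minor hpsd _ _) (hre _) hs' hp'
  rw [relEntCoh_dephase hpsd.1 (hdiag _) (hdiag _) (hdiag _) (hdiag _) rfl rfl hs hp hs' hp',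
    binEnt_eq]
  have htr' : ((ρ (0, 0) (0, 0)).re + (ρ (1, 1) (1, 1)).re)
      + ((ρ (0, 1) (0, 1)).re + (ρ (1, 0) (1, 0)).re) = 1 := by
    have := congrArg Complex.re htr
    simp [Matrix.trace, Fintype.sum_prod_type] at this
    linarith
  have hep : ((ρ (0, 0) (0, 0)).re + (ρ (1, 1) (1, 1)).re) * e
      + ((ρ (0, 1) (0, 1)).re + (ρ (1, 0) (1, 0)).re) * f = ep := by
    have h1 : (ρ (1, 1) (0, 0)).re = (ρ (0, 0) (1, 1)).re := by
      rw [← hpsd.1.apply (1, 1) (0, 0)]; simp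
    have h2 : (ρ (1, 0) (0, 1)).re = (ρ (0, 1) (1, 0)).re := by
      rw [← hpsd.1.apply (1, 0) (0, 1)]; simp
    have := congrArg Complex.re hX
    simp [Matrix.trace, Fintype.sum_prod_type, Matrix.mul_apply, PiXMinus] at this
    norm_num at this
    rw [hee, hff]
    linarith
  have hconc := Real.strictConcave_binEntropy.concaveOn.2 he hf
    (add_nonneg (hnn (0, 0)) (hnn (1, 1))) (add_nonneg (hnn (0, 1)) (hnn (1, 0))) htr'
  simp only [smul_eq_mul] at hconc
  rw [hep] at hconc
  have hlog : 0 < Real.log 2 := Real.log_pos one_lt_two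
  rw [le_div_iff₀ hlog, sub_mul, div_mul_cancel₀ _ hlog.ne']
  linear_combination hb + hb' + hconc + (-Real.log 2) * htr'

lemma bellDiag_eq_sum (p0 p1 p2 p3 : ℝ) :
    bellDiag p0 p1 p2 p3 =
      ((p0 / 2 : ℝ) : ℂ) • vecMulVec (fun i : Q2 => if i.1 = i.2 then (1 : ℂ) else 0)
          (star fun i : Q2 => if i.1 = i.2 then (1 : ℂ) else 0)
      + ((p1 / 2 : ℝ) : ℂ) • vecMulVec
          (fun i : Q2 => if i.1 = i.2 then (if i.1 = 0 then (1 : ℂ) else -1) else 0)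
          (star fun i : Q2 => if i.1 = i.2 then (if i.1 = 0 then (1 : ℂ) else -1) else 0)
      + ((p2 / 2 : ℝ) : ℂ) • vecMulVec (fun i : Q2 => if i.1 = i.2 then (0 : ℂ) else 1)
          (star fun i : Q2 => if i.1 = i.2 then (0 : ℂ) else 1)
      + ((p3 / 2 : ℝ) : ℂ) • vecMulVec
          (fun i : Q2 => if i.1 = i.2 then (0 : ℂ) else (if i.1 = 0 then 1 else -1))
          (star fun i : Q2 => if i.1 = i.2 then (0 : ℂ) else (if i.1 = 0 then 1 else -1)) := by
  ext ⟨i, i'⟩ ⟨j, j'⟩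
  fin_cases i <;> fin_cases i' <;> fin_cases j <;> fin_cases j' <;>
    simp [bellDiag, rhoGen, vecMulVec_apply] <;> ring

lemma bellDiag_posSemidef {p0 p1 p2 p3 : ℝ} (h0 : 0 ≤ p0) (h1 : 0 ≤ p1) (h2 : 0 ≤ p2)
    (h3 : 0 ≤ p3) : (bellDiag p0 p1 p2 p3).PosSemidef := by
  have hc : ∀ p : ℝ, 0 ≤ p → (0 : ℂ) ≤ ((p / 2 : ℝ) : ℂ) := fun p hp => by
    exact_mod_cast (by positivity : 0 ≤ p / 2)
  rw [bellDiag_eq_sum]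
  exact ((((posSemidef_vecMulVec_self_star _).smul (hc _ h0)).add
    ((posSemidef_vecMulVec_self_star _).smul (hc _ h1))).add
    ((posSemidef_vecMulVec_self_star _).smul (hc _ h2))).add
    ((posSemidef_vecMulVec_self_star _).smul (hc _ h3))

/-- The Bell-diagonal state with independent bit and phase errors attains the bound: each of its
parity blocks has a uniform diagonal and eigenvalues in ratio `(1 - ep) : ep`. -/
lemma bellDiag_relEntCoh {eb ep : ℝ}
    (hH : (bellDiag ((1-eb)*(1-ep)) ((1-eb)*ep) (eb*(1-ep)) (eb*ep)).IsHermitian) :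
    relEntCoh (dephase (bellDiag ((1-eb)*(1-ep)) ((1-eb)*ep) (eb*(1-ep)) (eb*ep)))
      = 1 - binEnt ep := by
  have hlog : 0 < Real.log 2 := Real.log_pos one_lt_two
  rw [relEntCoh_dephase hH (a := (1 - eb) * 2⁻¹) (d := (1 - eb) * (1 - 2⁻¹)) (b := eb * 2⁻¹)
    (c := eb * (1 - 2⁻¹)) (z := (((1 - eb) * (1 - 2 * ep) / 2 : ℝ) : ℂ))
    (w := ((eb * (1 - 2 * ep) / 2 : ℝ) : ℂ)) (μ := (1 - eb) * ep) (ν := (1 - eb) * (1 - ep))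
    (κ := eb * ep) (τ := eb * (1 - ep)), binEnt_eq, div_eq_iff hlog.ne',
    sub_mul 1 (_ / _), div_mul_cancel₀ _ hlog.ne']
  · have h1 := negMulLog_split (1 - eb) 2⁻¹
    have h2 := negMulLog_split eb 2⁻¹
    have h3 := negMulLog_split (1 - eb) ep
    have h4 := negMulLog_split eb ep
    rw [Real.binEntropy_two_inv] at h1 h2
    linear_combination h1 + h2 - h3 - h4
  all_goals first
    | (rw [Complex.normSq_ofReal]; ring)
    | (simp [bellDiag, rhoGen]; ring)
    | ring

/-- BB84 key rate via coherence. -/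
theorem stmt_1 (eb ep : ℝ) (heb0 : 0 ≤ eb) (heb1 : eb ≤ 1) (hep0 : 0 ≤ ep) (hep1 : ep ≤ 1) :
    (∀ ρ : Matrix Q2 Q2 ℂ, IsDensity ρ → (PiMinus * ρ).trace = (eb : ℂ) →
      (PiXMinus * ρ).trace = (ep : ℂ) → 1 - binEnt ep ≤ relEntCoh (dephase ρ)) ∧
    (IsDensity (bellDiag ((1-eb)*(1-ep)) ((1-eb)*ep) (eb*(1-ep)) (eb*ep)) ∧
      (PiMinus * bellDiag ((1-eb)*(1-ep)) ((1-eb)*ep) (eb*(1-ep)) (eb*ep)).trace = (eb : ℂ) ∧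
      (PiXMinus * bellDiag ((1-eb)*(1-ep)) ((1-eb)*ep) (eb*(1-ep)) (eb*ep)).trace = (ep : ℂ) ∧
      relEntCoh (dephase (bellDiag ((1-eb)*(1-ep)) ((1-eb)*ep) (eb*(1-ep)) (eb*ep)))
        = 1 - binEnt ep) ∧
    IsLeast {x : ℝ | ∃ ρ : Matrix Q2 Q2 ℂ, IsDensity ρ ∧ (PiMinus * ρ).trace = (eb : ℂ) ∧
        (PiXMinus * ρ).trace = (ep : ℂ) ∧ x = relEntCoh (dephase ρ) - binEnt eb}
      (1 - binEnt ep - binEnt eb) := by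
  have h0 : IsDensity (bellDiag ((1-eb)*(1-ep)) ((1-eb)*ep) (eb*(1-ep)) (eb*ep)) := by
    have hb : 0 ≤ 1 - eb := by linarith
    have hp : 0 ≤ 1 - ep := by linarith
    refine ⟨bellDiag_posSemidef (by positivity) (by positivity) (by positivity)
      (by positivity), ?_⟩
    simp [Matrix.trace, Fintype.sum_prod_type, bellDiag, rhoGen]
    ring
  have h1 : (PiMinus * bellDiag ((1-eb)*(1-ep)) ((1-eb)*ep) (eb*(1-ep)) (eb*ep)).trace
      = (eb : ℂ) := by
    simp [Matrix.trace, Fintype.sum_prod_type, bellDiag, rhoGen, PiMinus]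
    ring
  have h2 : (PiXMinus * bellDiag ((1-eb)*(1-ep)) ((1-eb)*ep) (eb*(1-ep)) (eb*ep)).trace
      = (ep : ℂ) := by
    simp [Matrix.trace, Fintype.sum_prod_type, Matrix.mul_apply, bellDiag, rhoGen, PiXMinus]
    ring
  have h3 := bellDiag_relEntCoh h0.1.1
  refine ⟨fun ρ hρ _ hX => lower_bound hρ hX, ⟨h0, h1, h2, h3⟩, ⟨_, h0, h1, h2, by rw [h3]⟩, ?_⟩
  rintro x ⟨ρ, hρ, -, hX, rfl⟩
  linarith [lower_bound hρ hX]

end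
end

section
/- Let ρ be a two-qubit density matrix with e_p = Tr(Π_x⁻ρ). Then the partially dephased state Φ(ρ) has the following diagonal entries in the two-qubit X basis: ⟨++|Φ(ρ)|++⟩ = ⟨−−|Φ(ρ)|−−⟩ = (1−e_p)/2 and ⟨+−|Φ(ρ)|+−⟩ = ⟨−+|Φ(ρ)|−+⟩ = e_p/2. -/
/-!
In the `Z` basis, `Φ(ρ)` keeps exactly the entries of `ρ` whose row and column have the same
parity: the diagonal and the two antidiagonal pairs. Conjugating with `|s t⟩` weights the diagonal
entries by `1/4` and the antidiagonal ones by `±1/4`, the sign being `+` when `s = t` and `-`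
otherwise. Since `Π_x⁻ = (1 - X ⊗ X) / 2`, the number `e_p` equals half the trace of `ρ` minus half
the sum of its antidiagonal. Hence the entries with `s ≠ t` are `e_p / 2`, and those with `s = t`
are `(Tr ρ - e_p) / 2`.
-/

open Matrix Complex Kronecker
open scoped ComplexOrder

noncomputable section

/-- Component of the X-basis product vector |s t⟩ (s,t ∈ {+,−}, with 0 ↦ +, 1 ↦ −)
at the computational basis index i. -/
noncomputable def xVec (s t : Fin 2) (i : Q2) : ℂ :=
  (1/2 : ℂ) * (if s = 1 ∧ i.1 = 1 then -1 else 1) * (if t = 1 ∧ i.2 = 1 then -1 else 1)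

/-- ⟨s t| M |s t⟩ in the X basis. -/
noncomputable def xDiag (M : Matrix Q2 Q2 ℂ) (s t : Fin 2) : ℂ :=
  ∑ i, ∑ j, star (xVec s t i) * M i j * xVec s t j

/-- `Φ` deletes the entries between indices of different `Z`-parity and fixes all others. -/
theorem dephase_apply (ρ : Matrix Q2 Q2 ℂ) (i j : Q2) :
    dephase ρ i j = if (i.1 = i.2 ↔ j.1 = j.2) then ρ i j else 0 := by
  simp only [dephase, PiPlus, PiMinus, Matrix.add_apply, Matrix.mul_diagonal,
    Matrix.diagonal_mul]
  by_cases hi : i.1 = i.2 <;> by_cases hj : j.1 = j.2 <;> simp [hi, hj]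

/-- X-basis diagonal of the partially dephased state. -/
theorem stmt_2 (ρ : Matrix Q2 Q2 ℂ) (hρ : IsDensity ρ) (ep : ℝ)
    (hep : (PiXMinus * ρ).trace = (ep : ℂ)) :
    xDiag (dephase ρ) 0 0 = (((1 - ep)/2 : ℝ) : ℂ) ∧
    xDiag (dephase ρ) 1 1 = (((1 - ep)/2 : ℝ) : ℂ) ∧
    xDiag (dephase ρ) 0 1 = ((ep/2 : ℝ) : ℂ) ∧
    xDiag (dephase ρ) 1 0 = ((ep/2 : ℝ) : ℂ) := by
  -- The trace condition and the value of `ep`, written out in the matrix entries of `ρ`.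
  have htr := hρ.2
  simp only [Matrix.trace, Matrix.diag, Fintype.sum_prod_type, Fin.sum_univ_two] at htr
  simp [Matrix.trace, Matrix.mul_apply, PiXMinus, Fintype.sum_prod_type,
    Fin.sum_univ_two] at hep
  have hstar : (starRingEnd ℂ) 2 = 2 := Complex.conj_ofNat 2
  refine ⟨?_, ?_, ?_, ?_⟩ <;>
    simp [xDiag, xVec, hstar, dephase_apply, Fintype.sum_prod_type, Fin.sum_univ_two]
  · linear_combination (1 / 2 : ℂ) * htr - (1 / 2 : ℂ) * hep
  · linear_combination (1 / 2 : ℂ) * htr - (1 / 2 : ℂ) * hep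
  · linear_combination (1 / 2 : ℂ) * hep
  · linear_combination (1 / 2 : ℂ) * hep

end
end

section
/- Let ρ be a two-qubit density matrix and write m_{ij} for the entries of Φ(ρ) in the computational basis (so the only nonzero off-diagonal entries are m₀₃ = m₃₀* in the Π⁺ block and m₁₂ = m₂₁* in the Π⁻ block). Let σ be the matrix obtained from Φ(ρ) by replacing m₀₃, m₃₀, m₁₂, m₂₁ with their real parts Re[m₀₃] and Re[m₁₂] (σ is again a density matrix). Then C(Φ(ρ)) ≥ C(σ). -/
/-!
Put `M = Φ(ρ)`. Since `M` is Hermitian, replacing its off-diagonal entries by their real parts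
gives `σ = (M + Mᵀ) / 2`, which has the same diagonal as `M`. The claim is therefore
`S(M) ≤ S(σ)`, an instance of concavity of the entropy together with `S(M) = S(Mᵀ)`.

Concavity is obtained from majorization (`vnEntropy_le_symmetrize`): writing `M = U Λ Uᴴ`, so that
`Mᵀ = Ū Λ Ūᴴ`, and `σ = V diag(μ) Vᴴ`, the eigenvalues satisfy `μ i = ∑ j, D i j * λ j` with
`D i j = (|(Vᴴ U) i j|² + |(Vᴴ Ū) i j|²) / 2`. This `D` is doubly stochastic because `Vᴴ U` and
`Vᴴ Ū` are unitary, and Jensen's inequality for `x ↦ x log x` finishes the proof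
(`sum_mul_logb_le_of_doublyStochastic`).
-/

open Matrix Complex Kronecker
open scoped ComplexOrder

noncomputable section

/-- Averaging nonnegative numbers by a doubly stochastic matrix does not increase `∑ x log₂ x`. -/
lemma sum_mul_logb_le_of_doublyStochastic {n : Type*} [Fintype n] (D : n → n → ℝ)
    (hD : ∀ i j, 0 ≤ D i j) (hrow : ∀ i, ∑ j, D i j = 1) (hcol : ∀ j, ∑ i, D i j = 1)
    (l m : n → ℝ) (hl : ∀ j, 0 ≤ l j) (hm : ∀ i, m i = ∑ j, D i j * l j) :
    ∑ i, m i * Real.logb 2 (m i) ≤ ∑ j, l j * Real.logb 2 (l j) := by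
  have key : ∀ i, m i * Real.log (m i) ≤ ∑ j, D i j * (l j * Real.log (l j)) := by
    intro i
    have h := Real.convexOn_mul_log.map_sum_le (t := Finset.univ) (w := D i) (p := l)
      (fun j _ => hD i j) (hrow i) (fun j _ => hl j)
    simpa only [smul_eq_mul, ← hm i] using h
  have hsum : ∑ i, m i * Real.log (m i) ≤ ∑ j, l j * Real.log (l j) := by
    calc ∑ i, m i * Real.log (m i) ≤ ∑ i, ∑ j, D i j * (l j * Real.log (l j)) :=
          Finset.sum_le_sum fun i _ => key i
      _ = ∑ j, l j * Real.log (l j) := by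
          rw [Finset.sum_comm]
          simp only [← Finset.sum_mul, hcol, one_mul]
  have hlog : 0 < Real.log 2 := Real.log_pos one_lt_two
  simp only [Real.logb, ← mul_div_assoc, ← Finset.sum_div]
  exact div_le_div_of_nonneg_right hsum hlog.le

lemma sum_normSq_row {n : Type*} [Fintype n] [DecidableEq n] {W : Matrix n n ℂ}
    (hW : W * Wᴴ = 1) (i : n) : ∑ j, Complex.normSq (W i j) = 1 := by
  have h := congrFun (congrFun hW i) i
  simp only [mul_apply, conjTranspose_apply, one_apply_eq, Complex.star_def,
    Complex.mul_conj] at h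
  exact_mod_cast h

lemma sum_normSq_col {n : Type*} [Fintype n] [DecidableEq n] {W : Matrix n n ℂ}
    (hW : Wᴴ * W = 1) (j : n) : ∑ i, Complex.normSq (W i j) = 1 := by
  have h := congrFun (congrFun hW j) j
  simp only [mul_apply, conjTranspose_apply, one_apply_eq, Complex.star_def,
    ← Complex.normSq_eq_conj_mul_self] at h
  exact_mod_cast h

lemma conj_diagonal_apply {n : Type*} [Fintype n] [DecidableEq n] (W : Matrix n n ℂ)
    (l : n → ℝ) (i : n) :
    (W * diagonal (fun j => (l j : ℂ)) * Wᴴ) i i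
      = ((∑ j, Complex.normSq (W i j) * l j : ℝ) : ℂ) := by
  rw [mul_apply]
  push_cast
  refine Finset.sum_congr rfl fun j _ => ?_
  rw [mul_diagonal, conjTranspose_apply, Complex.star_def, ← Complex.mul_conj]
  ring

/-- A Hermitian matrix as `U Λ Uᴴ`, in terms of plain matrix products. -/
lemma exists_unitary_diag {n : Type*} [Fintype n] [DecidableEq n] {A : Matrix n n ℂ}
    (hA : A.IsHermitian) : ∃ U : Matrix n n ℂ, U * Uᴴ = 1 ∧ Uᴴ * U = 1 ∧
      A = U * diagonal (fun j => (hA.eigenvalues j : ℂ)) * Uᴴ := by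
  refine ⟨hA.eigenvectorUnitary, ?_, ?_, ?_⟩
  · exact Unitary.mul_star_self_of_mem hA.eigenvectorUnitary.2
  · exact Unitary.star_mul_self_of_mem hA.eigenvectorUnitary.2
  · have h := hA.spectral_theorem
    rw [Unitary.conjStarAlgAut_apply] at h
    exact h

/-- Symmetrization `(M + Mᵀ) / 2` does not decrease the von Neumann entropy. -/
lemma vnEntropy_le_symmetrize {n : Type*} [Fintype n] [DecidableEq n] {M N : Matrix n n ℂ}
    (hM : M.PosSemidef) (hN : N = (1 / 2 : ℂ) • (M + Mᵀ)) : vnEntropy M ≤ vnEntropy N := by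
  have hMh := hM.isHermitian
  have hNh : N.IsHermitian := by
    have h2 : (Mᵀ)ᴴ = Mᵀ := hMh.transpose
    rw [IsHermitian, hN, conjTranspose_smul, conjTranspose_add, hMh.eq, h2]
    simp
  rw [vnEntropy, vnEntropy, dif_pos hMh, dif_pos hNh]
  apply neg_le_neg
  obtain ⟨U, hU1, hU2, hU⟩ := exists_unitary_diag hMh
  obtain ⟨V, hV1, hV2, hV⟩ := exists_unitary_diag hNh
  set L : Matrix n n ℂ := diagonal (fun j => (hMh.eigenvalues j : ℂ)) with hL
  -- `X` is the entrywise conjugate of `U`; it diagonalizes `Mᵀ`.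
  obtain ⟨X, hX⟩ : ∃ X : Matrix n n ℂ, X = Uᴴᵀ := ⟨_, rfl⟩
  have hXH : Xᴴ = Uᵀ := by rw [hX]; ext i j; simp
  have hX1 : X * Xᴴ = 1 := by rw [hXH, hX, ← transpose_mul, hU1, transpose_one]
  have hX2 : Xᴴ * X = 1 := by rw [hXH, hX, ← transpose_mul, hU2, transpose_one]
  have hMt : Mᵀ = X * L * Xᴴ := by
    rw [hXH, hX]
    conv_lhs => rw [hU]
    rw [transpose_mul, transpose_mul, hL, diagonal_transpose, Matrix.mul_assoc]
  have unit_left : ∀ Y : Matrix n n ℂ, Y * Yᴴ = 1 → (Vᴴ * Y) * (Vᴴ * Y)ᴴ = 1 := by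
    intro Y hY
    rw [conjTranspose_mul, conjTranspose_conjTranspose, Matrix.mul_assoc, ← Matrix.mul_assoc Y,
      hY, Matrix.one_mul, hV2]
  have unit_right : ∀ Y : Matrix n n ℂ, Yᴴ * Y = 1 → (Vᴴ * Y)ᴴ * (Vᴴ * Y) = 1 := by
    intro Y hY
    rw [conjTranspose_mul, conjTranspose_conjTranspose, Matrix.mul_assoc, ← Matrix.mul_assoc V,
      hV1, Matrix.one_mul, hY]
  have hdiag : diagonal (fun j => (hNh.eigenvalues j : ℂ))
      = (1 / 2 : ℂ) • ((Vᴴ * U) * L * (Vᴴ * U)ᴴ + (Vᴴ * X) * L * (Vᴴ * X)ᴴ) := by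
    calc diagonal (fun j => (hNh.eigenvalues j : ℂ))
        = (Vᴴ * V) * diagonal (fun j => (hNh.eigenvalues j : ℂ)) * (Vᴴ * V) := by
          rw [hV2, Matrix.one_mul, Matrix.mul_one]
      _ = Vᴴ * (V * diagonal (fun j => (hNh.eigenvalues j : ℂ)) * Vᴴ) * V := by
          simp only [Matrix.mul_assoc]
      _ = Vᴴ * ((1 / 2 : ℂ) • (U * L * Uᴴ + X * L * Xᴴ)) * V := by
          rw [← hV, ← hU, ← hMt, hN]
      _ = _ := by
          simp only [Matrix.mul_smul, Matrix.smul_mul, Matrix.mul_add, Matrix.add_mul,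
            conjTranspose_mul, conjTranspose_conjTranspose, Matrix.mul_assoc]
  refine sum_mul_logb_le_of_doublyStochastic
    (fun i j => (Complex.normSq ((Vᴴ * U) i j) + Complex.normSq ((Vᴴ * X) i j)) / 2)
    (fun i j => ?_) (fun i => ?_) (fun j => ?_) _ _ hM.eigenvalues_nonneg (fun i => ?_)
  · have h1 := Complex.normSq_nonneg ((Vᴴ * U) i j)
    have h2 := Complex.normSq_nonneg ((Vᴴ * X) i j)
    positivity
  · rw [← Finset.sum_div, Finset.sum_add_distrib, sum_normSq_row (unit_left U hU1),
      sum_normSq_row (unit_left X hX1)]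
    norm_num
  · rw [← Finset.sum_div, Finset.sum_add_distrib, sum_normSq_col (unit_right U hU2),
      sum_normSq_col (unit_right X hX2)]
    norm_num
  · have h := congrFun (congrFun hdiag i) i
    rw [diagonal_apply_eq, Matrix.smul_apply, Matrix.add_apply, hL, conj_diagonal_apply,
      conj_diagonal_apply, smul_eq_mul] at h
    have h' : hNh.eigenvalues i = 1 / 2 *
        (∑ j, Complex.normSq ((Vᴴ * U) i j) * hMh.eigenvalues j
          + ∑ j, Complex.normSq ((Vᴴ * X) i j) * hMh.eigenvalues j) := by
      apply Complex.ofReal_injective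
      rw [h]
      push_cast
      rfl
    rw [h', ← Finset.sum_add_distrib, Finset.mul_sum]
    exact Finset.sum_congr rfl fun j _ => by ring

lemma dephase_posSemidef {ρ : Matrix Q2 Q2 ℂ} (hρ : ρ.PosSemidef) : (dephase ρ).PosSemidef := by
  have hp : PiPlusᴴ = PiPlus := by
    unfold PiPlus
    rw [diagonal_conjTranspose]
    congr 1
    ext i
    by_cases h : i.1 = i.2 <;> simp [h]
  have hm : PiMinusᴴ = PiMinus := by
    unfold PiMinus
    rw [diagonal_conjTranspose]
    congr 1
    ext i
    by_cases h : i.1 = i.2 <;> simp [h]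
  have h1 := hρ.mul_mul_conjTranspose_same PiPlus
  have h2 := hρ.mul_mul_conjTranspose_same PiMinus
  rw [hp] at h1
  rw [hm] at h2
  exact h1.add h2

/-- replacing the off-diagonal entries of Φ(ρ) by their real parts does
not increase the coherence. -/
theorem stmt_5 (ρ : Matrix Q2 Q2 ℂ) (hρ : IsDensity ρ) :
    relEntCoh (Matrix.of fun i j =>
        if i = j then dephase ρ i j else (((dephase ρ i j).re : ℝ) : ℂ))
      ≤ relEntCoh (dephase ρ) := by
  have hM := dephase_posSemidef hρ.1
  have hdiag : diagPart (Matrix.of fun i j =>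
      if i = j then dephase ρ i j else (((dephase ρ i j).re : ℝ) : ℂ)) = diagPart (dephase ρ) := by
    simp [diagPart]
  rw [relEntCoh, relEntCoh, hdiag]
  refine sub_le_sub_left (vnEntropy_le_symmetrize hM ?_) _
  ext i j
  rw [Matrix.smul_apply, Matrix.add_apply, transpose_apply, of_apply, smul_eq_mul]
  split_ifs with h
  · subst h
    ring
  · rw [← hM.isHermitian.apply j i, Complex.star_def, Complex.add_conj]
    push_cast
    ring

end
end
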